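/- For all reals a > 0, b ∈ (0,1), and z ∈ [0,1), the incomplete Beta function has the convergent series representation B(z;a,b) = z^a · ∑_{k=0}^∞ Γ(k+1−b)·z^k / (Γ(1−b)·(a+k)·k!). -/

import Mathlib

/-!
Expand `(1 - t) ^ (b - 1)` in its binomial series `∑ cₖ tᵏ` and integrate against `t ^ (a - 1)` term
by term. Dominated convergence justifies the interchange: on `(0, z]` the `k`-th term is at most
`t ^ (a - 1) * |cₖ zᵏ|`, and `∑ |cₖ zᵏ|` converges because `z < 1`.
-/

open MeasureTheory Real

noncomputable def incBeta (z a b : ℝ) : ℝ := ∫ t in (0:ℝ)..z, t ^ (a - 1) * (1 - t) ^ (b - 1)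

theorem integral_rpow_sub_one_add_natCast {a z : ℝ} (ha : 0 < a) (hz : 0 ≤ z) (n : ℕ) :
    ∫ t in 0..z, t ^ (a - 1 + n) = z ^ a * (z ^ n / (a + n)) := by
  have han : 0 < a + n := by positivity
  have hexp : a - 1 + n + 1 = a + n := by ring
  rw [integral_rpow (Or.inl (by linarith)), hexp, zero_rpow han.ne', sub_zero,
    rpow_add_of_nonneg hz ha.le n.cast_nonneg, rpow_natCast, mul_div_assoc]

theorem hasSum_integral_rpow_smul_of_hasSum_pow_smul {E : Type*} [NormedAddCommGroup E]
    [NormedSpace ℝ E] [CompleteSpace E] {c : ℕ → E} {f : ℝ → E} {a z : ℝ} (ha : 0 < a)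
    (hz : 0 ≤ z) (hc : Summable fun n ↦ ‖z ^ n • c n‖)
    (hf : ∀ t ∈ Set.Ioc 0 z, HasSum (fun n ↦ t ^ n • c n) (f t)) :
    HasSum (fun n : ℕ ↦ (z ^ a * (z ^ n / (a + n))) • c n) (∫ t in 0..z, t ^ (a - 1) • f t) := by
  have split_rpow {t : ℝ} (ht : t ∈ Set.Ioc 0 z) (n : ℕ) :
      t ^ (a - 1 + n) • c n = t ^ (a - 1) • t ^ n • c n := by
    rw [rpow_add_natCast ht.1.ne', mul_smul]
  have norm_le {t : ℝ} (ht : t ∈ Set.Ioc 0 z) (n : ℕ) :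
      ‖t ^ (a - 1 + n) • c n‖ ≤ t ^ (a - 1) * ‖z ^ n • c n‖ := by
    have ht0 := ht.1.le
    rw [split_rpow ht, norm_smul, norm_of_nonneg (rpow_nonneg ht0 _), norm_smul, norm_smul,
      norm_of_nonneg (pow_nonneg ht0 n), norm_of_nonneg (pow_nonneg hz n)]
    gcongr
    exact ht.2
  simp_rw [← integral_rpow_sub_one_add_natCast ha hz, ← intervalIntegral.integral_smul_const]
  refine intervalIntegral.hasSum_integral_of_dominated_convergence
    (fun n t ↦ t ^ (a - 1) * ‖z ^ n • c n‖) (fun n ↦ by fun_prop) ?_ ?_ ?_ ?_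
  · rw [Set.uIoc_of_le hz]
    exact fun n ↦ .of_forall fun t ht ↦ norm_le ht n
  · exact .of_forall fun t _ ↦ hc.mul_left _
  · simp_rw [tsum_mul_left]
    exact (intervalIntegral.intervalIntegrable_rpow' (by linarith)).mul_const _
  · rw [Set.uIoc_of_le hz]
    exact .of_forall fun t ht ↦ by simpa only [split_rpow ht] using (hf t ht).const_smul _

theorem hasSum_multichoose_mul_pow (s : ℝ) {x : ℝ} (hx : |x| < 1) :
    HasSum (fun n : ℕ ↦ Ring.multichoose s n * x ^ n) ((1 - x) ^ (-s)) := by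
  have hmem : x ∈ Metric.eball (0 : ℝ) 1 := by
    rwa [← ENNReal.ofReal_one, Metric.eball_ofReal, mem_ball_zero_iff]
  have h := (one_div_one_sub_rpow_hasFPowerSeriesOnBall_zero s).hasSum hmem
  have hx' : 0 ≤ 1 - x := sub_nonneg.2 (lt_of_abs_lt hx).le
  simpa [← rpow_neg hx', ← Ring.multichoose_eq, mul_comm] using h

theorem Gamma_add_nat_div_Gamma_eq {s : ℝ} (hs : ∀ k : ℕ, s ≠ -k) (n : ℕ) :
    Gamma (s + n) / Gamma s = (ascPochhammer ℝ n).eval s := by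
  have eval_ofReal : (ascPochhammer ℂ n).eval (s : ℂ) = ((ascPochhammer ℝ n).eval s : ℝ) := by
    rw [← ascPochhammer_map Complex.ofRealHom]
    exact Polynomial.eval_map_apply Complex.ofRealHom s
  rw [← Complex.ofReal_inj, ← eval_ofReal,
    ← Complex.Gamma_add_nat_div_Gamma_eq (s : ℂ) fun k ↦ mod_cast hs k]
  simp only [Complex.ofReal_div, ← Complex.Gamma_ofReal, Complex.ofReal_add, Complex.ofReal_natCast]

theorem multichoose_eq_Gamma_div {s : ℝ} (hs : ∀ k : ℕ, s ≠ -k) (n : ℕ) :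
    Ring.multichoose s n = Gamma (s + n) / (Gamma s * n.factorial) := by
  rw [← div_div, Gamma_add_nat_div_Gamma_eq hs, eq_div_iff (by positivity), mul_comm,
    ← nsmul_eq_mul, Ring.factorial_nsmul_multichoose_eq_ascPochhammer,
    Polynomial.ascPochhammer_smeval_eq_eval]

theorem incBeta_series_general {a b z : ℝ} (ha : 0 < a) (hb : ∀ k : ℕ, b ≠ k + 1)
    (hz : z ∈ Set.Ico 0 1) :
    HasSum
      (fun k : ℕ ↦
        z ^ a * (Gamma (k + 1 - b) * z ^ k / (Gamma (1 - b) * (a + k) * k.factorial)))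
      (incBeta z a b) := by
  have hs (k : ℕ) : 1 - b ≠ -k := fun h ↦ hb k (by linarith)
  have binomial {t : ℝ} (ht0 : 0 ≤ t) (htz : t ≤ z) :
      HasSum (fun k : ℕ ↦ t ^ k • Ring.multichoose (1 - b) k) ((1 - t) ^ (b - 1)) := by
    have ht : |t| < 1 := by rw [abs_of_nonneg ht0]; exact htz.trans_lt hz.2
    simpa only [neg_sub, smul_eq_mul, mul_comm] using hasSum_multichoose_mul_pow (1 - b) ht
  refine (hasSum_integral_rpow_smul_of_hasSum_pow_smul ha hz.1 (binomial hz.1 le_rfl).summable.norm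
    fun t ht ↦ binomial ht.1.le ht.2).congr_fun fun k ↦ ?_
  rw [multichoose_eq_Gamma_div hs, smul_eq_mul, sub_add_eq_add_sub, add_comm 1 (k : ℝ)]
  field_simp

theorem incBeta_series (a b z : ℝ) (ha : 0 < a) (hb : b ∈ Set.Ioo (0:ℝ) 1)
    (hz : z ∈ Set.Ico (0:ℝ) 1) :
    HasSum
      (fun k : ℕ =>
        z ^ a * (Real.Gamma (k + 1 - b) * z ^ k / (Real.Gamma (1 - b) * (a + k) * Nat.factorial k)))
      (incBeta z a b) := by
  exact incBeta_series_general ha (fun k ↦ (hb.2.trans_le (by simp)).ne) hz
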